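/- arXiv:math/9904026 — 2 statements merged into one kernel-verified Lean document; each statement's English description precedes it below -/
import Mathlib

section
/- Let A₁, A₂ : ℝ² → M_m(ℝ) be continuously differentiable and satisfy the zero-curvature (flatness) condition ∂A₁/∂x₂ − ∂A₂/∂x₁ + [A₁, A₂] = 0 at every point of ℝ². Then the flat connection integrates globally: there exists a differentiable map g : ℝ² → M_m(ℝ) such that g(0,0) = 1, g(x) is invertible for every x ∈ ℝ², and ∂g/∂x₁ = A₁·g and ∂g/∂x₂ = A₂·g at every point of ℝ². -/
attribute [local instance] Matrix.normedAddCommGroup Matrix.normedSpace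

/-!
The connection is the 1-form `ω = A₁ dx₁ + A₂ dx₂`, and `dg = ω g` is to be solved with `g 0 = 1`.
Along the ray through `p` it restricts to the linear equation `c' = ω (t p) p c`, so `g p` has to be
the value at `t = 1` of its solution `c p`. Vanishing curvature says that `h ↦ t ω (t p) h (c p t)`
solves the variational equation which the derivative of `c p t` in `p` ought to satisfy; Grönwall's
inequality shows that it is that derivative, and `t = 1` gives `dg = ω g`.

Every step also applies to the dual equation `dk = -k ω`. Its solution satisfies `d (k g) = 0`, so
`k` is a left inverse of `g`. The set where `g` is invertible is open because the units are, and
closed because it is where `g k = 1`, hence it is everything.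
-/

open Set Filter Topology Metric
open scoped Nat

section LinearODE

variable {E : Type*} [NormedAddCommGroup E] [NormedSpace ℝ E]

/-- The terms of the Dyson series of the linear equation `c' = M c` with `c t₀ = v`: the `n`-th term
is the `n`-fold iterated integral `∫ M s₁ (∫ M s₂ (⋯ v))`, and the series sums to the solution. -/
noncomputable def dysonTerm (M : ℝ → E →L[ℝ] E) (t₀ : ℝ) (v : E) : ℕ → ℝ → E
  | 0 => fun _ => v
  | n + 1 => fun t => ∫ s in t₀..t, M s (dysonTerm M t₀ v n s)

variable {M : ℝ → E →L[ℝ] E} {K R t t₀ : ℝ}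

theorem dysonTerm_succ_self (M : ℝ → E →L[ℝ] E) (t₀ : ℝ) (v : E) (n : ℕ) :
    dysonTerm M t₀ v (n + 1) t₀ = 0 :=
  intervalIntegral.integral_same

theorem norm_dysonTerm_le (hK : ∀ s ∈ ball t₀ R, ‖M s‖ ≤ K) (v : E) (n : ℕ)
    (ht : t ∈ ball t₀ R) : ‖dysonTerm M t₀ v n t‖ ≤ (K * |t - t₀|) ^ n / n ! * ‖v‖ := by
  induction n generalizing t with
  | zero => simp [dysonTerm]
  | succ n ih =>
    have hbound : ∀ s ∈ uIoc t₀ t,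
        ‖M s (dysonTerm M t₀ v n s)‖ ≤ K ^ (n + 1) / n ! * ‖v‖ * |s - t₀| ^ n := fun s hs => by
      have hs : s ∈ ball t₀ R := (convex_ball t₀ R).ordConnected.uIcc_subset
        (mem_ball_self (pos_of_mem_ball ht)) ht (uIoc_subset_uIcc hs)
      calc ‖M s (dysonTerm M t₀ v n s)‖ ≤ K * ((K * |s - t₀|) ^ n / n ! * ‖v‖) :=
            (M s).le_of_opNorm_le_of_le (hK s hs) (ih hs)
        _ = K ^ (n + 1) / n ! * ‖v‖ * |s - t₀| ^ n := by ring
    have hint : Continuous fun s : ℝ => K ^ (n + 1) / n ! * ‖v‖ * |s - t₀| ^ n := by fun_prop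
    calc ‖dysonTerm M t₀ v (n + 1) t‖
        = ‖∫ s in uIoc t₀ t, M s (dysonTerm M t₀ v n s)‖ :=
          intervalIntegral.norm_integral_eq_norm_integral_uIoc _
      _ ≤ ∫ s in uIoc t₀ t, K ^ (n + 1) / n ! * ‖v‖ * |s - t₀| ^ n :=
          MeasureTheory.norm_integral_le_of_norm_le (hint.intervalIntegrable t₀ t).def'
            (MeasureTheory.ae_restrict_of_forall_mem measurableSet_uIoc hbound)
      _ = (K * |t - t₀|) ^ (n + 1) / (n + 1)! * ‖v‖ := by
          rw [MeasureTheory.integral_const_mul, integral_pow_abs_sub_uIoc, Nat.factorial_succ,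
            mul_pow]
          push_cast
          field_simp

variable [CompleteSpace E]

theorem hasDerivAt_dysonTerm_succ (hM : Continuous M) (t₀ : ℝ) (v : E) (n : ℕ) (t : ℝ) :
    HasDerivAt (dysonTerm M t₀ v (n + 1)) (M t (dysonTerm M t₀ v n t)) t := by
  have hcont : Continuous (dysonTerm M t₀ v n) := by
    induction n with
    | zero => exact continuous_const
    | succ n ih =>
      exact continuous_iff_continuousAt.2 fun t =>
        ((hM.clm_apply ih).integral_hasStrictDerivAt t₀ t).hasDerivAt.continuousAt
  exact ((hM.clm_apply hcont).integral_hasStrictDerivAt t₀ t).hasDerivAt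

theorem exists_isIntegralCurve_clm (hM : Continuous M) (t₀ : ℝ) (v : E) :
    ∃ c : ℝ → E, c t₀ = v ∧ IsIntegralCurve c (M · ·) := by
  refine ⟨fun t => v + ∑' n, dysonTerm M t₀ v (n + 1) t, by simp [dysonTerm_succ_self], fun t => ?_⟩
  obtain ⟨R, hR⟩ : ∃ R, dist t t₀ < R := exists_gt _
  have hR₀ : 0 < R := dist_nonneg.trans_lt hR
  obtain ⟨K, hK⟩ := (isCompact_closedBall t₀ R).exists_bound_of_continuousOn hM.continuousOn
  replace hK : ∀ s ∈ ball t₀ R, ‖M s‖ ≤ K := fun s hs => hK s (ball_subset_closedBall hs)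
  have hK₀ : 0 ≤ K := (norm_nonneg _).trans (hK t hR)
  have hbound : ∀ n, ∀ s ∈ ball t₀ R, ‖dysonTerm M t₀ v n s‖ ≤ (K * R) ^ n / n ! * ‖v‖ :=
    fun n s hs => (norm_dysonTerm_le hK v n hs).trans (by
      have : |s - t₀| ≤ R := (mem_ball.1 hs).le
      gcongr)
  have hsum : Summable fun n : ℕ => (K * R) ^ n / n ! * ‖v‖ :=
    (Real.summable_pow_div_factorial _).mul_right _
  have hderiv : HasDerivAt (fun s => ∑' n, dysonTerm M t₀ v (n + 1) s)
      (∑' n, M t (dysonTerm M t₀ v n t)) t :=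
    hasDerivAt_tsum_of_isPreconnected (hsum.mul_left K) isOpen_ball
      (convex_ball t₀ R).isPreconnected (fun n s _ => hasDerivAt_dysonTerm_succ hM t₀ v n s)
      (fun n s hs => (M s).le_of_opNorm_le_of_le (hK s hs) (hbound n s hs))
      (mem_ball_self hR₀) (by simp [dysonTerm_succ_self, summable_zero]) hR
  have hsum_t : Summable fun n => dysonTerm M t₀ v n t :=
    .of_norm_bounded hsum fun n => hbound n t hR
  have hvalue : ∑' n, M t (dysonTerm M t₀ v n t) = M t (v + ∑' n, dysonTerm M t₀ v (n + 1) t) := by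
    rw [← (M t).map_tsum hsum_t, hsum_t.tsum_eq_zero_add]
    rfl
  exact (hderiv.const_add v).congr_deriv hvalue

end LinearODE

section ParameterDependence

theorem gronwallBound_zero_eq_mul (K ε x : ℝ) :
    gronwallBound 0 K ε x = ε * gronwallBound 0 K 1 x := by
  unfold gronwallBound
  split_ifs <;> ring

theorem eventually_forall_norm_sub_lt {X T F : Type*} [TopologicalSpace X] [TopologicalSpace T]
    [SeminormedAddCommGroup F] {f : X → T → F} (hf : Continuous ↿f) {s : Set T} (hs : IsCompact s)
    (p : X) {ε : ℝ} (hε : 0 < ε) : ∀ᶠ q in 𝓝 p, ∀ t ∈ s, ‖f q t - f p t‖ < ε := by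
  refine hs.eventually_forall_of_forall_eventually fun t _ => ?_
  have hcont : Continuous fun z : X × T => ‖f z.1 z.2 - f p z.2‖ :=
    (hf.sub (hf.comp (continuous_const.prodMk continuous_snd))).norm
  exact hcont.continuousAt.eventually_lt continuousAt_const (by simpa using hε)

variable {X E F : Type*} [NormedAddCommGroup X] [NormedSpace ℝ X]
  [NormedAddCommGroup E] [NormedSpace ℝ E] [NormedAddCommGroup F] [NormedSpace ℝ F]

theorem eventually_forall_norm_sub_sub_le {T : Type*} [TopologicalSpace T] {f : X → T → F}
    {f' : X → T → X →L[ℝ] F} (hf : ∀ q t, HasFDerivAt (f · t) (f' q t) q) (hf' : Continuous ↿f')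
    {s : Set T} (hs : IsCompact s) (p : X) {ε : ℝ} (hε : 0 < ε) :
    ∀ᶠ q in 𝓝 p, ∀ t ∈ s, ‖f q t - f p t - f' p t (q - p)‖ ≤ ε * ‖q - p‖ := by
  obtain ⟨δ, hδ, hball⟩ := eventually_nhds_iff_ball.1 (eventually_forall_norm_sub_lt hf' hs p hε)
  filter_upwards [ball_mem_nhds p hδ] with q hq t ht
  exact (convex_ball p δ).norm_image_sub_le_of_norm_hasFDerivWithin_le'
    (fun z _ => (hf z t).hasFDerivWithinAt) (fun z hz => (hball z hz t ht).le)
    (mem_ball_self hδ) hq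

theorem norm_le_gronwallBound_of_hasDerivAt_clm_add {N : ℝ → E →L[ℝ] E} {w r : ℝ → E}
    {a b K ρ : ℝ} (hw : ∀ t, HasDerivAt w (N t (w t) + r t) t) (hwa : w a = 0)
    (hN : ∀ t ∈ Icc a b, ‖N t‖ ≤ K) (hr : ∀ t ∈ Icc a b, ‖r t‖ ≤ ρ) :
    ∀ t ∈ Icc a b, ‖w t‖ ≤ gronwallBound 0 K ρ (t - a) := by
  refine norm_le_gronwallBound_of_norm_deriv_right_le
    (fun t _ => (hw t).continuousAt.continuousWithinAt) (fun t _ => (hw t).hasDerivWithinAt)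
    (by simp [hwa]) fun t ht => ?_
  replace ht := Ico_subset_Icc_self ht
  exact norm_add_le_of_le ((N t).le_of_opNorm_le (hN t ht) _) (hr t ht)

theorem norm_sub_sub_le_gronwallBound_of_isIntegralCurve_clm {M N B : ℝ → E →L[ℝ] E}
    {c d y : ℝ → E} {a b K C D δ ε : ℝ} (hc : IsIntegralCurve c (M · ·))
    (hd : IsIntegralCurve d (N · ·)) (hy : ∀ t, HasDerivAt y (M t (y t) + B t (c t)) t)
    (hcd : c a = d a) (hya : y a = 0) (hN : ∀ t ∈ Icc a b, ‖N t‖ ≤ K)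
    (hC : ∀ t ∈ Icc a b, ‖c t‖ ≤ C) (hD : ∀ t ∈ Icc a b, ‖y t‖ ≤ D)
    (hε : ∀ t ∈ Icc a b, ‖N t - M t‖ ≤ ε) (hδ : ∀ t ∈ Icc a b, ‖N t - M t - B t‖ ≤ δ) :
    ∀ t ∈ Icc a b, ‖d t - c t - y t‖ ≤ gronwallBound 0 K (δ * C + ε * D) (t - a) := by
  have hderiv : ∀ t, HasDerivAt (fun t => d t - c t - y t)
      (N t (d t - c t - y t) + ((N t - M t - B t) (c t) + (N t - M t) (y t))) t := fun t => by
    refine (((hd t).sub (hc t)).sub (hy t)).congr_deriv ?_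
    simp only [sub_apply, map_sub]
    abel
  exact norm_le_gronwallBound_of_hasDerivAt_clm_add hderiv (by simp [hcd, hya]) hN fun t ht =>
    norm_add_le_of_le (ContinuousLinearMap.le_of_opNorm_le_of_le _ (hδ t ht) (hC t ht))
      (ContinuousLinearMap.le_of_opNorm_le_of_le _ (hε t ht) (hD t ht))

theorem hasFDerivAt_of_isIntegralCurve_clm {M : X → ℝ → E →L[ℝ] E} {M' : X → ℝ → X →L[ℝ] E →L[ℝ] E}
    (hM : Continuous ↿M) (hMd : ∀ q t, HasFDerivAt (M · t) (M' q t) q) (hM' : Continuous ↿M')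
    {c : X → ℝ → E} (hc : ∀ q, IsIntegralCurve (c q) (M q · ·)) {a b : ℝ} (hab : a ≤ b)
    (hca : ∀ p q, c p a = c q a) {p : X} {Y : ℝ → X →L[ℝ] E} (hYa : Y a = 0)
    (hY : ∀ t, HasDerivAt Y (M p t ∘L Y t + (M' p t).flip (c p t)) t) :
    HasFDerivAt (c · b) (Y b) p := by
  obtain ⟨K, hK⟩ := isCompact_Icc (a := a) (b := b) |>.exists_bound_of_continuousOn
    (hM.comp (Continuous.prodMk_right p)).continuousOn
  obtain ⟨C, hC⟩ := isCompact_Icc (a := a) (b := b) |>.exists_bound_of_continuousOn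
    (hc p).continuous.continuousOn
  obtain ⟨D, hD⟩ := isCompact_Icc (a := a) (b := b) |>.exists_bound_of_continuousOn
    fun t _ => (hY t).continuousAt.continuousWithinAt
  rw [hasFDerivAt_iff_isLittleO, Asymptotics.isLittleO_iff]
  intro η hη
  obtain ⟨ε, hε, hεη⟩ := exists_pos_mul_lt hη ((C + D) * gronwallBound 0 (K + 1) 1 (b - a))
  filter_upwards [eventually_forall_norm_sub_lt hM isCompact_Icc p one_pos,
    eventually_forall_norm_sub_lt hM isCompact_Icc p hε,
    eventually_forall_norm_sub_sub_le hMd hM' isCompact_Icc p hε] with q hq₁ hqε hqd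
  have hYq : ∀ t, HasDerivAt (fun t => Y t (q - p))
      (M p t (Y t (q - p)) + M' p t (q - p) (c p t)) t := fun t => by
    simpa using (hY t).clm_apply (hasDerivAt_const t (q - p))
  calc ‖c q b - c p b - Y b (q - p)‖
      ≤ gronwallBound 0 (K + 1) (ε * ‖q - p‖ * C + ε * (D * ‖q - p‖)) (b - a) :=
        norm_sub_sub_le_gronwallBound_of_isIntegralCurve_clm (hc p) (hc q) hYq (hca p q)
          (by simp [hYa])
          (fun t ht => (norm_le_norm_add_norm_sub' _ _).trans
            (add_le_add (hK t ht) (hq₁ t ht).le))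
          hC (fun t ht => (Y t).le_of_opNorm_le (hD t ht) _) (fun t ht => (hqε t ht).le) hqd b
          (right_mem_Icc.2 hab)
    _ = (C + D) * gronwallBound 0 (K + 1) 1 (b - a) * ε * ‖q - p‖ := by
        rw [gronwallBound_zero_eq_mul]
        ring
    _ ≤ η * ‖q - p‖ := by gcongr

end ParameterDependence

section Curvature

variable {X 𝔸 𝔹 : Type*} [NormedAddCommGroup X] [NormedSpace ℝ X]
  [NormedRing 𝔸] [NormedAlgebra ℝ 𝔸] [NormedRing 𝔹] [NormedAlgebra ℝ 𝔹]

/-- The curvature `dω - ω ∧ ω` at `p` of an algebra-valued 1-form `ω`, evaluated on `(h, k)`. The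
sign of the quadratic term is the one that makes vanishing curvature the integrability condition
of `dg = ω g`. -/
noncomputable def connectionCurvature (ω : X → X →L[ℝ] 𝔸) (p h k : X) : 𝔸 :=
  fderiv ℝ ω p h k - fderiv ℝ ω p k h - ⁅ω p h, ω p k⁆

theorem connectionCurvature_clm_comp (L : 𝔸 →L[ℝ] 𝔹) (hL : ∀ a b, L ⁅a, b⁆ = ⁅L a, L b⁆)
    {ω : X → X →L[ℝ] 𝔸} {p : X} (hω : DifferentiableAt ℝ ω p) (h k : X) :
    connectionCurvature (fun q => L ∘L ω q) p h k = L (connectionCurvature ω p h k) := by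
  have hderiv : fderiv ℝ (fun q => L ∘L ω q) p
      = ContinuousLinearMap.compL ℝ X 𝔸 𝔹 L ∘L fderiv ℝ ω p :=
    (ContinuousLinearMap.compL ℝ X 𝔸 𝔹 L).hasFDerivAt.comp p hω.hasFDerivAt |>.fderiv
  simp [connectionCurvature, hderiv, hL]

end Curvature

section Frobenius

variable {X E F : Type*} [NormedAddCommGroup X] [NormedSpace ℝ X]
  [NormedAddCommGroup E] [NormedSpace ℝ E] [NormedAddCommGroup F] [NormedSpace ℝ F]

theorem continuous_clm_flip {T : Type*} [TopologicalSpace T] {f : T → X →L[ℝ] E →L[ℝ] F}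
    (hf : Continuous f) : Continuous fun t => (f t).flip :=
  (ContinuousLinearMap.flipₗᵢ ℝ X E F).continuous.comp hf

theorem hasDerivAt_clm_flip {f : ℝ → X →L[ℝ] E →L[ℝ] F} {f' : X →L[ℝ] E →L[ℝ] F} {t : ℝ}
    (hf : HasDerivAt f f' t) : HasDerivAt (fun s => (f s).flip) f'.flip t := by
  let flipL : (X →L[ℝ] E →L[ℝ] F) →L[ℝ] E →L[ℝ] X →L[ℝ] F :=
    (ContinuousLinearMap.flipₗᵢ ℝ X E F).toContinuousLinearEquiv
  exact HasFDerivAt.comp_hasDerivAt (l := flipL) t flipL.hasFDerivAt hf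

theorem hasFDerivAt_apply_smul_self {ω : X → X →L[ℝ] F} (hω : Differentiable ℝ ω) (t : ℝ) (q : X) :
    HasFDerivAt (fun q => ω (t • q) q) (ω (t • q) + t • (fderiv ℝ ω (t • q)).flip q) q := by
  have hcomp : HasFDerivAt (fun q => ω (t • q)) (t • fderiv ℝ ω (t • q)) q :=
    (HasFDerivAt.comp (g := ω) q (hω (t • q)).hasFDerivAt
      ((hasFDerivAt_id q).const_smul t)).congr_fderiv (by ext; simp)
  exact hcomp.clm_apply (hasFDerivAt_id q)

variable {ω : X → X →L[ℝ] E →L[ℝ] E}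

theorem hasDerivAt_smul_flip_of_connectionCurvature_eq_zero (hω : Differentiable ℝ ω)
    (hflat : ∀ p h k, connectionCurvature ω p h k = 0) {p : X} {c : ℝ → E}
    (hc : IsIntegralCurve c fun t => ω (t • p) p) (t : ℝ) :
    HasDerivAt (fun t => t • (ω (t • p)).flip (c t))
      (ω (t • p) p ∘L (t • (ω (t • p)).flip (c t))
        + (ω (t • p) + t • (fderiv ℝ ω (t • p)).flip p).flip (c t)) t := by
  have hray : HasDerivAt (fun t : ℝ => ω (t • p)) (fderiv ℝ ω (t • p) p) t := by
    have hsmul : HasDerivAt (fun t : ℝ => t • p) p t := by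
      simpa using (hasDerivAt_id t).smul_const p
    exact HasFDerivAt.comp_hasDerivAt (l := ω) t (hω (t • p)).hasFDerivAt hsmul
  refine ((hasDerivAt_id t).smul ((hasDerivAt_clm_flip hray).clm_apply (hc t))).congr_deriv ?_
  ext h
  have hcurv : fderiv ℝ ω (t • p) p h (c t) = fderiv ℝ ω (t • p) h p (c t)
      + (ω (t • p) p (ω (t • p) h (c t)) - ω (t • p) h (ω (t • p) p (c t))) :=
    eq_add_of_sub_eq' (sub_eq_zero.1 (DFunLike.congr_fun (hflat (t • p) p h) (c t)))
  simp only [add_apply, smul_apply, ContinuousLinearMap.comp_apply, ContinuousLinearMap.flip_apply,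
    id_eq, map_smul, one_smul, hcurv]
  module

theorem exists_hasFDerivAt_of_connectionCurvature_eq_zero [CompleteSpace E] (hω : ContDiff ℝ 1 ω)
    (hflat : ∀ p h k, connectionCurvature ω p h k = 0) (v : E) :
    ∃ u : X → E, u 0 = v ∧ ∀ p, HasFDerivAt u ((ω p).flip (u p)) p := by
  have hωc : Continuous ω := hω.continuous
  have hωd : Differentiable ℝ ω := hω.differentiable one_ne_zero
  have hω' : Continuous (fderiv ℝ ω) := hω.continuous_fderiv one_ne_zero
  let M : X → ℝ → E →L[ℝ] E := fun q t => ω (t • q) q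
  let M' : X → ℝ → X →L[ℝ] E →L[ℝ] E := fun q t =>
    ω (t • q) + t • (fderiv ℝ ω (t • q)).flip q
  have hM : Continuous ↿M := by
    change Continuous fun z : X × ℝ => ω (z.2 • z.1) z.1
    fun_prop
  have hM' : Continuous ↿M' := by
    have hflip : Continuous fun z : X × ℝ => (fderiv ℝ ω (z.2 • z.1)).flip :=
      continuous_clm_flip (hω'.comp (by fun_prop))
    change Continuous fun z : X × ℝ => ω (z.2 • z.1) + z.2 • (fderiv ℝ ω (z.2 • z.1)).flip z.1
    fun_prop
  choose c hc₀ hc using fun q => exists_isIntegralCurve_clm (M := M q)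
    (hM.comp (Continuous.prodMk_right q)) 0 v
  refine ⟨fun q => c q 1, ?_, fun p => ?_⟩
  · have hderiv : ∀ t, HasDerivAt (c 0) 0 t := fun t => by simpa [M] using hc 0 t
    rw [← hc₀ 0]
    exact is_const_of_deriv_eq_zero (fun t => (hderiv t).differentiableAt)
      (fun t => (hderiv t).deriv) 1 0
  · have hY := hasFDerivAt_of_isIntegralCurve_clm hM
      (fun q t => hasFDerivAt_apply_smul_self hωd t q) hM' hc zero_le_one
      (fun p q => (hc₀ p).trans (hc₀ q).symm) (zero_smul ℝ _)
      (hasDerivAt_smul_flip_of_connectionCurvature_eq_zero hωd hflat (hc p))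
    simpa only [one_smul] using hY

end Frobenius

section BanachAlgebra

variable {𝔸 : Type*} [NormedRing 𝔸]

theorem forall_isUnit_of_forall_mul_eq_one [CompleteSpace 𝔸] {T : Type*} [TopologicalSpace T]
    [PreconnectedSpace T] {g k : T → 𝔸} (hg : Continuous g) (hk : Continuous k)
    (hkg : ∀ p, k p * g p = 1) {p₀ : T} (hp₀ : IsUnit (g p₀)) (p : T) : IsUnit (g p) := by
  have hinv : {p | IsUnit (g p)} = {p | g p * k p = 1} := by
    ext p
    refine ⟨fun hp => ?_, fun hp => ⟨⟨g p, k p, hp, hkg p⟩, rfl⟩⟩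
    rw [mem_ofPred, ← hp.mul_left_inj, mul_assoc, hkg, mul_one, one_mul]
  have hclopen : IsClopen {p | IsUnit (g p)} :=
    ⟨hinv ▸ isClosed_eq (hg.mul hk) continuous_const, Units.isOpen.preimage hg⟩
  exact (hclopen.eq_univ ⟨p₀, hp₀⟩).ge (mem_univ p)

variable [NormedAlgebra ℝ 𝔸] {X : Type*} [NormedAddCommGroup X] [NormedSpace ℝ X]

theorem mul_eq_one_of_hasFDerivAt {ω : X → X →L[ℝ] 𝔸} {g k : X → 𝔸}
    (hg : ∀ p, HasFDerivAt g ((ContinuousLinearMap.mul ℝ 𝔸 ∘L ω p).flip (g p)) p)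
    (hk : ∀ p, HasFDerivAt k ((-(ContinuousLinearMap.mul ℝ 𝔸).flip ∘L ω p).flip (k p)) p)
    {p₀ : X} (hp₀ : k p₀ * g p₀ = 1) (p : X) : k p * g p = 1 := by
  have hkg : ∀ p, HasFDerivAt (k * g) 0 p := fun p =>
    ((hk p).mul' (hg p)).congr_fderiv (by ext h; simp [mul_assoc])
  rw [← hp₀]
  exact is_const_of_fderiv_eq_zero (𝕜 := ℝ) (fun p => (hkg p).differentiableAt)
    (fun p => (hkg p).fderiv) p p₀

theorem exists_isUnit_hasFDerivAt_of_connectionCurvature_eq_zero [CompleteSpace 𝔸]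
    {ω : X → X →L[ℝ] 𝔸} (hω : ContDiff ℝ 1 ω) (hflat : ∀ p h k, connectionCurvature ω p h k = 0) :
    ∃ g : X → 𝔸, g 0 = 1 ∧ (∀ p, IsUnit (g p)) ∧
      ∀ p, HasFDerivAt g ((ContinuousLinearMap.mul ℝ 𝔸 ∘L ω p).flip (g p)) p := by
  have hsolve (L : 𝔸 →L[ℝ] 𝔸 →L[ℝ] 𝔸) (hL : ∀ a b, L ⁅a, b⁆ = ⁅L a, L b⁆) :
      ∃ u : X → 𝔸, u 0 = 1 ∧ ∀ p, HasFDerivAt u ((L ∘L ω p).flip (u p)) p :=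
    exists_hasFDerivAt_of_connectionCurvature_eq_zero (contDiff_const.clm_comp hω)
      (fun p h k => by
        rw [connectionCurvature_clm_comp L hL (hω.differentiable one_ne_zero p), hflat, map_zero]) 1
  obtain ⟨g, hg₀, hg⟩ := hsolve (ContinuousLinearMap.mul ℝ 𝔸) fun a b => by
    ext x
    simp [Ring.lie_def, mul_assoc]
  obtain ⟨k, hk₀, hk⟩ := hsolve (-(ContinuousLinearMap.mul ℝ 𝔸).flip) fun a b => by
    ext x
    simp [Ring.lie_def, mul_assoc]
  have hkg : ∀ p, k p * g p = 1 :=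
    mul_eq_one_of_hasFDerivAt hg hk (p₀ := 0) (by rw [hk₀, hg₀, mul_one])
  have hgc : Continuous g := continuous_iff_continuousAt.2 fun p => (hg p).continuousAt
  have hkc : Continuous k := continuous_iff_continuousAt.2 fun p => (hk p).continuousAt
  exact ⟨g, hg₀, forall_isUnit_of_forall_mul_eq_one hgc hkc hkg (hg₀ ▸ isUnit_one), hg⟩

end BanachAlgebra

section Plane

variable {𝔸 : Type*} [NormedRing 𝔸] [NormedAlgebra ℝ 𝔸]

/-- The 1-form `A₁ dx₁ + A₂ dx₂` on the plane, the connection with coefficients `(A₁, A₂)`. -/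
noncomputable def connectionForm (A₁ A₂ : ℝ × ℝ → 𝔸) (p : ℝ × ℝ) : ℝ × ℝ →L[ℝ] 𝔸 :=
  (ContinuousLinearMap.fst ℝ ℝ ℝ).smulRight (A₁ p)
    + (ContinuousLinearMap.snd ℝ ℝ ℝ).smulRight (A₂ p)

variable {A₁ A₂ : ℝ × ℝ → 𝔸}

theorem contDiff_connectionForm {n : WithTop ℕ∞} (hA₁ : ContDiff ℝ n A₁) (hA₂ : ContDiff ℝ n A₂) :
    ContDiff ℝ n (connectionForm A₁ A₂) :=
  (contDiff_const.smulRight hA₁).add (contDiff_const.smulRight hA₂)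

theorem hasFDerivAt_connectionForm {A₁' A₂' : ℝ × ℝ →L[ℝ] 𝔸} {p : ℝ × ℝ}
    (hA₁ : HasFDerivAt A₁ A₁' p) (hA₂ : HasFDerivAt A₂ A₂' p) :
    HasFDerivAt (connectionForm A₁ A₂)
      (ContinuousLinearMap.smulRightL ℝ (ℝ × ℝ) 𝔸 (.fst ℝ ℝ ℝ) ∘L A₁'
        + ContinuousLinearMap.smulRightL ℝ (ℝ × ℝ) 𝔸 (.snd ℝ ℝ ℝ) ∘L A₂') p :=
  ((ContinuousLinearMap.smulRightL ℝ (ℝ × ℝ) 𝔸 (.fst ℝ ℝ ℝ)).hasFDerivAt.comp p hA₁).add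
    ((ContinuousLinearMap.smulRightL ℝ (ℝ × ℝ) 𝔸 (.snd ℝ ℝ ℝ)).hasFDerivAt.comp p hA₂)

theorem connectionCurvature_connectionForm {p : ℝ × ℝ} (hA₁ : DifferentiableAt ℝ A₁ p)
    (hA₂ : DifferentiableAt ℝ A₂ p) (h k : ℝ × ℝ) :
    connectionCurvature (connectionForm A₁ A₂) p h k = (h.2 * k.1 - h.1 * k.2) •
      (fderiv ℝ A₁ p (0, 1) - fderiv ℝ A₂ p (1, 0) + (A₁ p * A₂ p - A₂ p * A₁ p)) := by
  have hcoord (L : ℝ × ℝ →L[ℝ] 𝔸) (z : ℝ × ℝ) : L z = z.1 • L (1, 0) + z.2 • L (0, 1) := by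
    rw [← map_smul, ← map_smul, ← map_add]
    simp
  have hderiv (h k : ℝ × ℝ) : fderiv ℝ (connectionForm A₁ A₂) p h k
      = k.1 • fderiv ℝ A₁ p h + k.2 • fderiv ℝ A₂ p h := by
    rw [(hasFDerivAt_connectionForm hA₁.hasFDerivAt hA₂.hasFDerivAt).fderiv]
    rfl
  rw [connectionCurvature, hderiv, hderiv, hcoord _ h, hcoord _ h, hcoord _ k, hcoord _ k]
  simp only [connectionForm, add_apply, ContinuousLinearMap.smulRight_apply,
    ContinuousLinearMap.coe_fst', ContinuousLinearMap.coe_snd', Ring.lie_def, mul_add, add_mul,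
    mul_smul_comm, smul_mul_assoc]
  module

end Plane

theorem stmt9_general {𝔸 : Type*} [NormedRing 𝔸] [NormedAlgebra ℝ 𝔸] [CompleteSpace 𝔸]
    (A₁ A₂ : ℝ × ℝ → 𝔸) (hA₁ : ContDiff ℝ 1 A₁) (hA₂ : ContDiff ℝ 1 A₂)
    (hflat : ∀ p : ℝ × ℝ,
      fderiv ℝ A₁ p (0, 1) - fderiv ℝ A₂ p (1, 0) + (A₁ p * A₂ p - A₂ p * A₁ p) = 0) :
    ∃ g : ℝ × ℝ → 𝔸, Differentiable ℝ g ∧ g (0, 0) = 1 ∧ (∀ p : ℝ × ℝ, IsUnit (g p)) ∧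
      ∀ p : ℝ × ℝ, fderiv ℝ g p (1, 0) = A₁ p * g p ∧ fderiv ℝ g p (0, 1) = A₂ p * g p := by
  obtain ⟨g, hg₀, hg_unit, hg⟩ := exists_isUnit_hasFDerivAt_of_connectionCurvature_eq_zero
    (contDiff_connectionForm hA₁ hA₂) fun p h k => by
      rw [connectionCurvature_connectionForm (hA₁.differentiable one_ne_zero p)
        (hA₂.differentiable one_ne_zero p), hflat, smul_zero]
  refine ⟨g, fun p => (hg p).differentiableAt, hg₀, hg_unit, fun p => ?_⟩
  simp [(hg p).fderiv, connectionForm]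

section MatrixNorm

variable {X ι κ : Type*} [NormedAddCommGroup X] [NormedSpace ℝ X] [Fintype ι] [Fintype κ]

-- `C¹` regularity only involves the topology of the target, so it carries over from the sup norm,
-- which is not submultiplicative on square matrices, to the operator norm.
theorem contDiff_one_linftyOp {A : X → Matrix ι κ ℝ} (hA : ContDiff ℝ 1 A) :
    @ContDiff ℝ _ X _ _ (Matrix ι κ ℝ) Matrix.linftyOpNormedAddCommGroup
      Matrix.linftyOpNormedSpace 1 A :=
  (@contDiff_one_iff_fderiv ℝ _ X _ _ (Matrix ι κ ℝ) Matrix.linftyOpNormedAddCommGroup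
    Matrix.linftyOpNormedSpace A).2
    ⟨hA.differentiable one_ne_zero, hA.continuous_fderiv one_ne_zero⟩

end MatrixNorm

/-- A flat connection on `ℝ²` integrates globally: if `A₁, A₂ : ℝ² → Mₘ(ℝ)`
are `C¹` and satisfy the zero-curvature condition
`∂A₁/∂x₂ − ∂A₂/∂x₁ + [A₁, A₂] = 0` everywhere, then there is a differentiable
`g : ℝ² → Mₘ(ℝ)` with `g(0,0) = 1`, `g(x)` invertible for all `x`, and
`∂g/∂x₁ = A₁·g`, `∂g/∂x₂ = A₂·g` everywhere. -/
theorem stmt9 (m : ℕ) (A₁ A₂ : ℝ × ℝ → Matrix (Fin m) (Fin m) ℝ)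
    (hA₁ : ContDiff ℝ 1 A₁) (hA₂ : ContDiff ℝ 1 A₂)
    (hflat : ∀ p : ℝ × ℝ,
      fderiv ℝ A₁ p (0, 1) - fderiv ℝ A₂ p (1, 0) + (A₁ p * A₂ p - A₂ p * A₁ p) = 0) :
    ∃ g : ℝ × ℝ → Matrix (Fin m) (Fin m) ℝ,
      Differentiable ℝ g ∧ g (0, 0) = 1 ∧ (∀ p : ℝ × ℝ, IsUnit (g p)) ∧
        ∀ p : ℝ × ℝ,
          fderiv ℝ g p (1, 0) = A₁ p * g p ∧ fderiv ℝ g p (0, 1) = A₂ p * g p :=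
  @stmt9_general _ Matrix.linftyOpNormedRing Matrix.linftyOpNormedAlgebra
    (FiniteDimensional.complete ℝ (Matrix (Fin m) (Fin m) ℝ)) A₁ A₂
    (contDiff_one_linftyOp hA₁) (contDiff_one_linftyOp hA₂) hflat
end

section
/- Let c ∈ ℂ. There exists a function g : ℂ → ℂ that is complex differentiable at every z ≠ 0, satisfies g(z) ≠ 0 for all z ≠ 0, and solves g'(z) = (c/z)·g(z) for all z ≠ 0, if and only if c is an integer. (Equivalently: the flat ℂ*-connection (c/z) dz on ℂ ∖ {0} is the logarithmic differential dg·g⁻¹ of a globally defined nonvanishing holomorphic function precisely when c ∈ ℤ; hence the gauge orbit space H^{1|0}(ℝ² ∖ {0}; 𝔤(ℂ*)) of such flat connections is ℂ/ℤ.) -/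
/-!
Pulling a solution of `g' = (c / z) g` back along `w ↦ z * exp w` gives an equation with constant
coefficient `c`, so `g (z * exp w) = exp (c * w) • g z`. Going once around the origin (`w = 2πi`)
returns to `z` and multiplies `g z` by the monodromy `exp (2πi c)`, which is `1` exactly when `c`
is an integer; in that case `z ↦ z ^ c` is single-valued and solves the equation.
-/

open Complex

variable {E : Type*} [NormedAddCommGroup E] [NormedSpace ℂ E]

/-- `g` is a flat section over `ℂ \ {0}` of the connection `d - (c / z) dz` on the trivial bundle
with fibre `E`. Sections are total functions on `ℂ`, whose value at `0` is unconstrained. -/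
def IsFlatSection (c : ℂ) (g : ℂ → E) : Prop :=
  ∀ z : ℂ, z ≠ 0 → HasDerivAt g ((c / z) • g z) z

theorem isFlatSection_zpow_smul (n : ℤ) (v : E) :
    IsFlatSection (n : ℂ) fun z : ℂ ↦ z ^ n • v := by
  intro z hz
  have hderiv : HasDerivAt (fun z : ℂ ↦ z ^ n • v) ((n * z ^ (n - 1)) • v) z :=
    (hasDerivAt_zpow n z (Or.inl hz)).smul_const v
  refine hderiv.congr_deriv ?_
  rw [smul_smul, zpow_sub_one₀ hz, div_mul_eq_mul_div, mul_div_assoc, div_eq_mul_inv]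

namespace IsFlatSection

variable {c z : ℂ} {g : ℂ → E}

theorem hasDerivAt_comp_mul_exp (hg : IsFlatSection c g) (hz : z ≠ 0) (w : ℂ) :
    HasDerivAt (fun w ↦ g (z * exp w)) (c • g (z * exp w)) w := by
  have hne : z * exp w ≠ 0 := mul_ne_zero hz (exp_ne_zero w)
  have hderiv := (hg _ hne).scomp w ((hasDerivAt_exp w).const_mul z)
  refine hderiv.congr_deriv ?_
  rw [smul_smul, mul_div_cancel₀ c hne]

theorem apply_mul_exp (hg : IsFlatSection c g) (hz : z ≠ 0) (w : ℂ) :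
    g (z * exp w) = exp (c * w) • g z := by
  have hderiv (w : ℂ) : HasDerivAt (fun w ↦ exp (-(c * w)) • g (z * exp w)) 0 w := by
    have hexp : HasDerivAt (fun w ↦ exp (-(c * w))) (exp (-(c * w)) * -c) w :=
      (hasDerivAt_const_mul c).neg.cexp
    refine (hexp.smul (hg.hasDerivAt_comp_mul_exp hz w)).congr_deriv ?_
    rw [smul_smul, ← add_smul, mul_neg, add_neg_cancel, zero_smul]
  have hconst : exp (-(c * w)) • g (z * exp w) = g z := by
    simpa using is_const_of_deriv_eq_zero (fun w ↦ (hderiv w).differentiableAt)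
      (fun w ↦ (hderiv w).deriv) w 0
  rw [← hconst, smul_smul, ← exp_add, add_neg_cancel, exp_zero, one_smul]

theorem ne_zero {z₀ : ℂ} (hg : IsFlatSection c g) (hz₀ : z₀ ≠ 0) (hgz₀ : g z₀ ≠ 0)
    (hz : z ≠ 0) : g z ≠ 0 := by
  have htransport := hg.apply_mul_exp hz₀ (log (z / z₀))
  rw [exp_log (div_ne_zero hz hz₀), mul_div_cancel₀ z hz₀] at htransport
  rw [htransport]
  exact smul_ne_zero (exp_ne_zero _) hgz₀

theorem exists_int_eq (hg : IsFlatSection c g) (hz : z ≠ 0) (hgz : g z ≠ 0) :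
    ∃ n : ℤ, c = n := by
  have hloop : g z = exp (c * (2 * Real.pi * I)) • g z := by
    simpa only [exp_two_pi_mul_I, mul_one] using hg.apply_mul_exp hz (2 * Real.pi * I)
  have hmonodromy : exp (c * (2 * Real.pi * I)) = 1 :=
    smul_left_injective ℂ hgz (by simpa only [one_smul] using hloop.symm)
  obtain ⟨n, hn⟩ := exp_eq_one_iff.mp hmonodromy
  exact ⟨n, mul_right_cancel₀ two_pi_I_ne_zero hn⟩

end IsFlatSection

theorem stmt11_general [Nontrivial E] (c : ℂ) :
    (∃ g : ℂ → E, IsFlatSection c g ∧ ∃ z : ℂ, z ≠ 0 ∧ g z ≠ 0) ↔ ∃ n : ℤ, c = n := by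
  constructor
  · rintro ⟨g, hg, z, hz, hgz⟩
    exact hg.exists_int_eq hz hgz
  · rintro ⟨n, rfl⟩
    obtain ⟨v, hv⟩ := exists_ne (0 : E)
    exact ⟨fun z ↦ z ^ n • v, isFlatSection_zpow_smul n v, 1, one_ne_zero, by simpa using hv⟩

/-- For `c ∈ ℂ`, there is a function `g : ℂ → ℂ`, complex differentiable
and nonvanishing away from `0`, with `g'(z) = (c/z)·g(z)` for all `z ≠ 0`, if and only
if `c` is an integer. (The flat `ℂ*`-connection `(c/z) dz` on `ℂ \ {0}` is the
logarithmic differential of a global nonvanishing holomorphic function exactly when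
`c ∈ ℤ`; hence the gauge orbit space `H^{1|0}(ℝ² \ {0}; 𝔤(ℂ*))` is `ℂ/ℤ`.) -/
theorem stmt11 (c : ℂ) :
    (∃ g : ℂ → ℂ, (∀ z : ℂ, z ≠ 0 → g z ≠ 0) ∧
        ∀ z : ℂ, z ≠ 0 → HasDerivAt g (c / z * g z) z)
      ↔ ∃ n : ℤ, c = (n : ℂ) := by
  rw [← stmt11_general (E := ℂ) c]
  constructor
  · rintro ⟨g, hne, hg⟩
    exact ⟨g, hg, 1, one_ne_zero, hne 1 one_ne_zero⟩
  · rintro ⟨g, hg, _, hz, hgz⟩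
    exact ⟨g, fun _ ↦ hg.ne_zero hz hgz, hg⟩
end
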